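/- Assume in addition that κ₁(s) = 0 for all s ∈ I (the ruled surface is developable). Then the unit vector field ν(s) = e(s) × e'(s) (note |e(s) × e'(s)| = 1 since |e| = |e'| = 1 and ⟪e, e'⟫ = 0) is normal to the surface everywhere: ⟪(∂F/∂s)(s,t), ν(s)⟫ = 0 and ⟪(∂F/∂t)(s,t), ν(s)⟫ = 0 for all (s,t) ∈ I × ℝ. In particular, F is a frontal map. -/

import Mathlib

noncomputable section
open scoped RealInnerProductSpace

/-- Euclidean 3-space `ℝ³`. -/
abbrev E3 : Type := EuclideanSpace ℝ (Fin 3)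

/-- The cross product on `E3`. -/
def cross (u v : E3) : E3 :=
  (WithLp.equiv 2 (Fin 3 → ℝ)).symm
    ![u 1 * v 2 - u 2 * v 1, u 2 * v 0 - u 0 * v 2, u 0 * v 1 - u 1 * v 0]

/-- Determinant of the 3×3 matrix with columns `u`, `v`, `w`. -/
def det3 (u v w : E3) : ℝ :=
  Matrix.det !![u 0, v 0, w 0; u 1, v 1, w 1; u 2, v 2, w 2]

namespace Ruled

/-- The director curve `e = v₀`. -/
def e (v₀ : ℝ → E3) : ℝ → E3 := v₀

/-- The base curve `r = v₀ × v₁`. -/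
def r (v₀ v₁ : ℝ → E3) : ℝ → E3 := fun s => cross (v₀ s) (v₁ s)

/-- The parametrization `F(s,t) = r(s) + t • e(s)` of the ruled surface. -/
def F (v₀ v₁ : ℝ → E3) (s t : ℝ) : E3 := r v₀ v₁ s + t • v₀ s

/-- `n₀ = v₀'`. -/
def n₀ (v₀ : ℝ → E3) : ℝ → E3 := fun s => deriv v₀ s

/-- `κ₁ = ⟪v₀', v₁'⟫`, the ε-part of the dual curvature. -/
def κ₁ (v₀ v₁ : ℝ → E3) : ℝ → ℝ := fun s => ⟪deriv v₀ s, deriv v₁ s⟫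

/-- `n₁ = v₁' - κ₁ • v₀'`. -/
def n₁ (v₀ v₁ : ℝ → E3) : ℝ → E3 := fun s => deriv v₁ s - κ₁ v₀ v₁ s • deriv v₀ s

/-- `t₀ = v₀ × n₀`. -/
def t₀ (v₀ : ℝ → E3) : ℝ → E3 := fun s => cross (v₀ s) (n₀ v₀ s)

/-- `t₁ = v₀ × n₁ + v₁ × n₀`. -/
def t₁ (v₀ v₁ : ℝ → E3) : ℝ → E3 :=
  fun s => cross (v₀ s) (n₁ v₀ v₁ s) + cross (v₁ s) (n₀ v₀ s)

/-- `τ₀ = ⟪n₀', t₀⟫`, the real part of the dual torsion. -/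
def τ₀ (v₀ : ℝ → E3) : ℝ → ℝ := fun s => ⟪deriv (n₀ v₀) s, t₀ v₀ s⟫

/-- `τ₁ = ⟪n₀', t₁⟫ + ⟪n₁', t₀⟫`, the ε-part of the dual torsion. -/
def τ₁ (v₀ v₁ : ℝ → E3) : ℝ → ℝ :=
  fun s => ⟪deriv (n₀ v₀) s, t₁ v₀ v₁ s⟫ + ⟪deriv (n₁ v₀ v₁) s, t₀ v₀ s⟫

/-- The striction curve `σ(s) = r(s) - ⟪r'(s), e'(s)⟫ • e(s)`. -/
def strict (v₀ v₁ : ℝ → E3) : ℝ → E3 :=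
  fun s => r v₀ v₁ s - ⟪deriv (r v₀ v₁) s, deriv (e v₀) s⟫ • e v₀ s

end Ruled

open Ruled

/-!
By the Leibniz rule `∂F/∂s = v₀' × v₁ + v₀ × v₁' + t v₀'`. Pairing this with `ν = v₀ × v₀'`, the
Binet–Cauchy identity and the relations `|v₀| = 1`, `⟪v₀, v₁⟫ = ⟪v₀, v₀'⟫ = 0` leave exactly
`⟪∂F/∂s, ν⟫ = κ₁`, while `∂F/∂t = v₀` is orthogonal to `ν` for any `v₀`. So `ν` is a normal field as
soon as `κ₁` vanishes.
-/

open Filter Topology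

section CrossProduct

open scoped Matrix

theorem cross_eq_toLp_crossProduct (u v : E3) : cross u v = WithLp.toLp 2 (u.ofLp ⨯₃ v.ofLp) :=
  rfl

theorem real_inner_eq_dotProduct {ι : Type*} [Fintype ι] (u v : EuclideanSpace ℝ ι) :
    ⟪u, v⟫ = u.ofLp ⬝ᵥ v.ofLp := by
  rw [EuclideanSpace.inner_eq_star_dotProduct, star_trivial, dotProduct_comm]

theorem inner_cross_cross (u v w x : E3) :
    ⟪cross u v, cross w x⟫ = ⟪u, w⟫ * ⟪v, x⟫ - ⟪u, x⟫ * ⟪v, w⟫ := by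
  simp only [cross_eq_toLp_crossProduct, real_inner_eq_dotProduct, cross_dot_cross]

theorem inner_left_cross (u v : E3) : ⟪u, cross u v⟫ = 0 := by
  rw [cross_eq_toLp_crossProduct, real_inner_eq_dotProduct, dot_self_cross]

theorem inner_right_cross (u v : E3) : ⟪v, cross u v⟫ = 0 := by
  rw [cross_eq_toLp_crossProduct, real_inner_eq_dotProduct, dot_cross_self]

theorem norm_cross_of_inner_eq_zero {u v : E3} (huv : ⟪u, v⟫ = 0) :
    ‖cross u v‖ = ‖u‖ * ‖v‖ := by
  rw [cross_eq_toLp_crossProduct, InnerProductGeometry.norm_ofLp_crossProduct,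
    InnerProductGeometry.inner_eq_zero_iff_angle_eq_pi_div_two u v |>.mp huv, Real.sin_pi_div_two,
    mul_one]

theorem isBilinearMap_cross : IsBilinearMap ℝ cross where
  add_left u u' v := by simp [cross_eq_toLp_crossProduct]
  smul_left c u v := by simp [cross_eq_toLp_crossProduct]
  add_right u v v' := by simp [cross_eq_toLp_crossProduct]
  smul_right c u v := by simp [cross_eq_toLp_crossProduct]

theorem hasDerivAt_cross {a b : ℝ → E3} {a' b' : E3} {s : ℝ}
    (ha : HasDerivAt a a' s) (hb : HasDerivAt b b' s) :
    HasDerivAt (fun u => cross (a u) (b u)) (cross (a s) b' + cross a' (b s)) s :=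
  isBilinearMap_cross.toContinuousBilinearMap.hasDerivAt_of_bilinear (fun _ => ha) (fun _ => hb)

end CrossProduct

theorem inner_deriv_eq_zero_of_eventually_norm_eq {V : Type*} [NormedAddCommGroup V]
    [InnerProductSpace ℝ V] {f : ℝ → V} {s c : ℝ} (hf : DifferentiableAt ℝ f s)
    (hnorm : ∀ᶠ u in 𝓝 s, ‖f u‖ = c) : ⟪f s, deriv f s⟫ = 0 := by
  have norm_sq_eventuallyEq : (fun u => ‖f u‖ ^ 2) =ᶠ[𝓝 s] fun _ => c ^ 2 :=
    hnorm.mono fun u hu => congrArg (· ^ 2) hu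
  have two_mul_inner_eq_zero : 2 * ⟪f s, deriv f s⟫ = 0 :=
    hf.hasDerivAt.norm_sq.unique
      ((hasDerivAt_const s (c ^ 2)).congr_of_eventuallyEq norm_sq_eventuallyEq)
  simpa using two_mul_inner_eq_zero

namespace Ruled

variable {v₀ v₁ : ℝ → E3} {s : ℝ}

theorem deriv_F_fst (hv₀ : DifferentiableAt ℝ v₀ s) (hv₁ : DifferentiableAt ℝ v₁ s) (t : ℝ) :
    deriv (fun u => F v₀ v₁ u t) s =
      cross (v₀ s) (deriv v₁ s) + cross (deriv v₀ s) (v₁ s) + t • deriv v₀ s :=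
  ((hasDerivAt_cross hv₀.hasDerivAt hv₁.hasDerivAt).add (hv₀.hasDerivAt.const_smul t)).deriv

theorem deriv_F_snd (v₀ v₁ : ℝ → E3) (s t : ℝ) : deriv (fun u => F v₀ v₁ s u) t = v₀ s := by
  simpa only [F, one_smul, id] using
    (((hasDerivAt_id t).smul_const (v₀ s)).const_add (r v₀ v₁ s)).deriv

theorem inner_deriv_F_fst_t₀ (hv₀ : DifferentiableAt ℝ v₀ s) (hv₁ : DifferentiableAt ℝ v₁ s)
    (hunit : ‖v₀ s‖ = 1) (horth : ⟪v₀ s, v₁ s⟫ = 0) (hderiv : ⟪v₀ s, deriv v₀ s⟫ = 0) (t : ℝ) :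
    ⟪deriv (fun u => F v₀ v₁ u t) s, t₀ v₀ s⟫ = κ₁ v₀ v₁ s := by
  have inner_cross_deriv_v₁ : ⟪cross (v₀ s) (deriv v₁ s), t₀ v₀ s⟫ = κ₁ v₀ v₁ s := by
    rw [t₀, n₀, inner_cross_cross, hderiv, real_inner_self_eq_norm_sq, hunit, κ₁,
      real_inner_comm (deriv v₀ s)]
    ring
  have inner_cross_deriv_v₀ : ⟪cross (deriv v₀ s) (v₁ s), t₀ v₀ s⟫ = 0 := by
    rw [t₀, n₀, inner_cross_cross, real_inner_comm (v₀ s) (deriv v₀ s), hderiv,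
      real_inner_comm (v₀ s) (v₁ s), horth]
    ring
  have inner_deriv_v₀ : ⟪deriv v₀ s, t₀ v₀ s⟫ = 0 := inner_right_cross _ _
  rw [deriv_F_fst hv₀ hv₁, inner_add_left, inner_add_left, real_inner_smul_left,
    inner_cross_deriv_v₁, inner_cross_deriv_v₀, inner_deriv_v₀, mul_zero, add_zero, add_zero]

theorem inner_deriv_F_snd_t₀ (v₀ v₁ : ℝ → E3) (s t : ℝ) :
    ⟪deriv (fun u => F v₀ v₁ s u) t, t₀ v₀ s⟫ = 0 := by
  rw [deriv_F_snd]
  exact inner_left_cross _ _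

end Ruled

theorem developable_is_frontal_general {v₀ v₁ : ℝ → E3} {s : ℝ}
    (hv₀ : DifferentiableAt ℝ v₀ s) (hv₁ : DifferentiableAt ℝ v₁ s)
    (hunit : ∀ᶠ u in 𝓝 s, ‖v₀ u‖ = 1) (horth : ⟪v₀ s, v₁ s⟫ = 0) (hdev : κ₁ v₀ v₁ s = 0) :
    ‖cross (e v₀ s) (deriv (e v₀) s)‖ = ‖deriv (e v₀) s‖ ∧
    ∀ t : ℝ,
      ⟪deriv (fun u => F v₀ v₁ u t) s, cross (e v₀ s) (deriv (e v₀) s)⟫ = 0 ∧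
      ⟪deriv (fun u => F v₀ v₁ s u) t, cross (e v₀ s) (deriv (e v₀) s)⟫ = 0 := by
  have norm_v₀ : ‖v₀ s‖ = 1 := hunit.self_of_nhds
  have inner_deriv : ⟪v₀ s, deriv v₀ s⟫ = 0 := inner_deriv_eq_zero_of_eventually_norm_eq hv₀ hunit
  refine ⟨?_, fun t => ⟨?_, inner_deriv_F_snd_t₀ v₀ v₁ s t⟩⟩
  · rw [e, norm_cross_of_inner_eq_zero inner_deriv, norm_v₀, one_mul]
  · exact (inner_deriv_F_fst_t₀ hv₀ hv₁ norm_v₀ horth inner_deriv t).trans hdev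

/-- For a non-cylindrical developable surface, `ν = e × e'` is a unit vector field
normal to both partial derivatives of `F`; in particular `F` is a frontal map. -/
theorem developable_is_frontal
    (I : Set ℝ) (v₀ v₁ : ℝ → E3)
    (hI : IsOpen I) (hI' : I.OrdConnected)
    (hv₀ : ContDiffOn ℝ (⊤ : ℕ∞) v₀ I) (hv₁ : ContDiffOn ℝ (⊤ : ℕ∞) v₁ I)
    (hunit : ∀ s ∈ I, ‖v₀ s‖ = 1) (horth : ∀ s ∈ I, ⟪v₀ s, v₁ s⟫ = 0)
    (harc : ∀ s ∈ I, ‖deriv v₀ s‖ = 1)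
    (hdev : ∀ s ∈ I, κ₁ v₀ v₁ s = 0) :
    ∀ s ∈ I,
      ‖cross (e v₀ s) (deriv (e v₀) s)‖ = 1 ∧
      ∀ t : ℝ,
        ⟪deriv (fun u => F v₀ v₁ u t) s, cross (e v₀ s) (deriv (e v₀) s)⟫ = 0 ∧
        ⟪deriv (fun u => F v₀ v₁ s u) t, cross (e v₀ s) (deriv (e v₀) s)⟫ = 0 := by
  intro s hs
  have hIs : I ∈ 𝓝 s := hI.mem_nhds hs
  rw [← harc s hs]
  exact developable_is_frontal_general ((hv₀.contDiffAt hIs).differentiableAt (by simp))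
    ((hv₁.contDiffAt hIs).differentiableAt (by simp)) (eventually_of_mem hIs hunit)
    (horth s hs) (hdev s hs)
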